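/- arXiv:1309.3796 — 2 statements merged into one kernel-verified Lean document; each statement's English description precedes it below -/
import Mathlib

section
/- Let q ≥ m ≥ 0 be integers, k a field, Λ = k[x_1,…,x_m]^{S_m} the ring of symmetric polynomials, and I ⊆ Λ the ideal generated by all complete homogeneous symmetric polynomials h_j with j > q − m. Then Λ/I is a finite-dimensional k-vector space of dimension equal to the binomial coefficient C(q, m). -/
/-!
STATEMENT 11: For integers `q ≥ m ≥ 0` and a field `k`, let `Λ = k[x₁,…,x_m]^{S_m}` be the
ring of symmetric polynomials and `I ⊆ Λ` the ideal generated by the complete homogeneous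
symmetric polynomials `h_j` for `j > q − m`.  Then `Λ/I` is a finite-dimensional `k`-vector
space of dimension `C(q, m)`.
-/

open MvPolynomial

/-- The ideal of the ring of symmetric polynomials generated by the complete homogeneous
symmetric polynomials `h_j` with `j > q - m`. -/
noncomputable def hsymmIdeal (k : Type*) [Field k] (m q : ℕ) :
    Ideal (symmetricSubalgebra (Fin m) k) :=
  Ideal.span {p : symmetricSubalgebra (Fin m) k |
    ∃ j : ℕ, q - m < j ∧ (p : MvPolynomial (Fin m) k) = hsymm (Fin m) k j}

/-!
Write `a_γ = det (x j ^ γ i)` and `Δ = a_(0, …, m - 1)`. Multiplying `∑ h_n Tⁿ = ∏ (1 - x_j T)⁻¹` by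
`∏_{j ≠ i} (1 - x_j T)` expresses the powers of `x_i` through the `h_n`; taking determinants,
`a_γ = s_γ Δ` with the Jacobi–Trudi determinant `s_γ = det h_{γ i - l}`. Antisymmetrizing
`f x^(0, …, m - 1)` for a symmetric `f` and cancelling `Δ` shows that the `s_γ` span `Λ`.

Put `d = q - m`. If some `γ i ≥ d + m`, a row of the Jacobi–Trudi matrix lies in `I`, so `s_γ ∈ I`.
Up to sign and repetition, the remaining `s_γ` are indexed by the `m`-subsets of
`{0, …, d + m - 1}`. They are independent modulo `I`: multiplying the matrix identity behind
`a_γ = s_γ Δ` by an adjugate gives `I Δ ⊆ (x_1^(d + m), …, x_m^(d + m))`, so the coefficients of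
`f Δ` at monomials with all exponents below `d + m` depend only on `f` modulo `I`, and for
`f = ∑ c_γ s_γ` they include every `c_γ`.
-/

lemma det_mem_of_row_mem {n A : Type*} [Fintype n] [DecidableEq n] [CommRing A] {I : Ideal A}
    {M : Matrix n n A} {i : n} (h : ∀ j, M i j ∈ I) : M.det ∈ I := by
  refine Ideal.Quotient.eq_zero_iff_mem.mp ((RingHom.map_det _ _).trans ?_)
  exact Matrix.det_eq_zero_of_row_eq_zero i fun j ↦ Ideal.Quotient.eq_zero_iff_mem.mpr (h j)

lemma coeff_eq_zero_of_mem_span_X_pow {σ R : Type*} [CommSemiring R] {N : ℕ} {f : MvPolynomial σ R}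
    (hf : f ∈ Ideal.span (Set.range fun i : σ ↦ (X i : MvPolynomial σ R) ^ N)) {α : σ →₀ ℕ}
    (hα : ∀ i, α i < N) : coeff α f = 0 := by
  have hrange : (Set.range fun i : σ ↦ (X i : MvPolynomial σ R) ^ N) =
      (fun s ↦ monomial s 1) '' Set.range fun i : σ ↦ Finsupp.single i N := by
    simp [← Set.range_comp, Function.comp_def, X_pow_eq_monomial]
  rw [hrange, mem_ideal_span_monomial_image] at hf
  by_contra h
  obtain ⟨_, ⟨i, rfl⟩, hi⟩ := hf α (mem_support_iff.mpr h)
  exact (hα i).not_ge (by simpa using hi i)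

lemma isRegular_X_sub_X {σ R : Type*} [CommRing R] {i j : σ} (hij : i ≠ j) :
    IsRegular (X i - X j : MvPolynomial σ R) := by
  classical
  let shift (a : MvPolynomial σ R) : MvPolynomial σ R →ₐ[R] MvPolynomial σ R :=
    aeval (Function.update X i (X i + a))
  have hinv : (shift (-X j)).comp (shift (X j)) = AlgHom.id R _ := by
    refine algHom_ext fun l ↦ ?_
    obtain rfl | hl := eq_or_ne l i
    · simp [shift, hij.symm]
    · simp [shift, hl]
  have hinj : Function.Injective (shift (X j)) :=
    Function.LeftInverse.injective (g := shift (-X j)) fun p ↦ congr($hinv p)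
  have hshift : shift (X j) (X i - X j) = X i := by simp [shift, hij.symm]
  refine isLeftRegular_iff_isRegular.mp fun a b hab ↦ hinj (isRegular_X.left (c := X i) ?_)
  simpa [hshift] using congr(shift (X j) $hab)

lemma mk_pow_mul_one_sub_C_mul_X {A : Type*} [CommRing A] (a : A) :
    PowerSeries.mk (a ^ ·) * (1 - Polynomial.C a * Polynomial.X : Polynomial A) = 1 := by
  ext n
  cases n <;> simp [mul_sub, ← mul_assoc, pow_succ, PowerSeries.coeff_one]

section GeneratingFunction

variable (σ R : Type*) [Fintype σ] [DecidableEq σ]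

lemma hsymm_eq_sum_finsuppAntidiag [CommSemiring R] (n : ℕ) :
    hsymm σ R n = ∑ l ∈ Finset.finsuppAntidiag Finset.univ n, ∏ i, X i ^ l i := by
  rw [hsymm]
  refine Finset.sum_bij' (fun s _ ↦ Multiset.toFinsupp s.1)
    (fun l hl ↦ ⟨Finsupp.toMultiset l, ?_⟩) ?_ ?_ ?_ ?_ ?_
  · simpa [Finsupp.card_toMultiset, Finsupp.sum_fintype] using hl
  · intro s _
    have hcard := Finsupp.card_toMultiset (Multiset.toFinsupp s.1)
    rw [Multiset.toFinsupp_toMultiset, s.2, Finsupp.sum_fintype _ _ (by simp)] at hcard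
    exact Finset.mem_finsuppAntidiag.mpr ⟨hcard.symm, Finset.subset_univ _⟩
  · exact fun _ _ ↦ Finset.mem_univ _
  · intro s _
    ext; simp
  · simp
  · intro s _
    rw [Finset.prod_multiset_map_count]
    exact Finset.prod_subset (Finset.subset_univ _) (by simp +contextual)

lemma mk_hsymm_eq_prod_mk_X_pow [CommSemiring R] :
    PowerSeries.mk (hsymm σ R) = ∏ i, PowerSeries.mk fun n ↦ (X i : MvPolynomial σ R) ^ n := by
  ext1 n
  simp [PowerSeries.coeff_prod, hsymm_eq_sum_finsuppAntidiag]

variable {σ} [CommRing R]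

/-- The polynomial `∏ j ≠ i, (1 - x j * T)`, whose coefficients are, up to sign, the elementary
symmetric polynomials in the variables other than `x i`. -/
noncomputable def esymmPolyErase (i : σ) : Polynomial (MvPolynomial σ R) :=
  ∏ j ∈ Finset.univ.erase i, (1 - Polynomial.C (X j) * Polynomial.X)

lemma natDegree_esymmPolyErase_lt (i : σ) :
    (esymmPolyErase R i).natDegree < Fintype.card σ := by
  have hfactor (j : σ) :
      (1 - Polynomial.C (X j : MvPolynomial σ R) * Polynomial.X).natDegree ≤ 1 := by
    compute_degree
  calc (esymmPolyErase R i).natDegree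
      ≤ ∑ _j ∈ Finset.univ.erase i, 1 :=
        (Polynomial.natDegree_prod_le _ _).trans (Finset.sum_le_sum fun j _ ↦ hfactor j)
    _ < Fintype.card σ := by
        simpa using Finset.card_erase_lt_of_mem (Finset.mem_univ i)

lemma mk_hsymm_mul_esymmPolyErase (i : σ) :
    PowerSeries.mk (hsymm σ R) * (esymmPolyErase R i : PowerSeries (MvPolynomial σ R)) =
      PowerSeries.mk (X i ^ ·) := by
  have hcancel : (∏ j ∈ Finset.univ.erase i, PowerSeries.mk fun n ↦ (X j : MvPolynomial σ R) ^ n) *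
      (esymmPolyErase R i : PowerSeries (MvPolynomial σ R)) = 1 := by
    rw [esymmPolyErase, ← Polynomial.coeToPowerSeries.ringHom_apply, map_prod,
      ← Finset.prod_mul_distrib]
    exact Finset.prod_eq_one fun j _ ↦ mk_pow_mul_one_sub_C_mul_X _
  rw [mk_hsymm_eq_prod_mk_X_pow, ← Finset.mul_prod_erase _ _ (Finset.mem_univ i), mul_assoc,
    hcancel, mul_one]

lemma X_pow_eq_sum_hsymm (i : σ) (n : ℕ) :
    (X i : MvPolynomial σ R) ^ n = ∑ l ∈ Finset.range (Fintype.card σ),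
      (if l ≤ n then hsymm σ R (n - l) else 0) * (esymmPolyErase R i).coeff l := by
  have hcoeff := congr(PowerSeries.coeff n $(mk_hsymm_mul_esymmPolyErase R i))
  rw [PowerSeries.coeff_mk] at hcoeff
  rw [← hcoeff]
  conv_lhs => rw [(esymmPolyErase R i).as_sum_range_C_mul_X_pow' (natDegree_esymmPolyErase_lt R i)]
  rw [← Polynomial.coeToPowerSeries.ringHom_apply, map_sum, Finset.mul_sum, map_sum]
  refine Finset.sum_congr rfl fun l _ ↦ ?_
  simp only [map_mul, map_pow, Polynomial.coeToPowerSeries.ringHom_apply, Polynomial.coe_C,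
    Polynomial.coe_X, ← mul_assoc, PowerSeries.coeff_mul_X_pow', PowerSeries.coeff_mul_C,
    PowerSeries.coeff_mk, ite_mul, zero_mul]

end GeneratingFunction

section Alternant

variable {σ R : Type*} [Fintype σ] [DecidableEq σ] [CommRing R]

variable (R) in
/-- The alternant `det (x j ^ γ i)`. For `σ = Fin m` and `γ = Fin.val` it is the Vandermonde
determinant. -/
noncomputable def alternant (γ : σ → ℕ) : MvPolynomial σ R :=
  (Matrix.of fun i j ↦ (X j : MvPolynomial σ R) ^ γ i).det

/-- The antisymmetrization `f ↦ ∑ τ, sign τ • τ f` over all permutations `τ` of the variables. -/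
noncomputable def antisymmetrize : MvPolynomial σ R →ₗ[R] MvPolynomial σ R :=
  ∑ τ : Equiv.Perm σ, ((τ.sign : ℤ) : R) • (rename τ).toLinearMap

lemma antisymmetrize_apply (f : MvPolynomial σ R) :
    antisymmetrize f = ∑ τ : Equiv.Perm σ, ((τ.sign : ℤ) : R) • rename τ f := by
  simp [antisymmetrize]

lemma antisymmetrize_mul_of_isSymmetric {f : MvPolynomial σ R} (hf : f.IsSymmetric)
    (g : MvPolynomial σ R) : antisymmetrize (f * g) = f * antisymmetrize g := by
  simp only [antisymmetrize_apply, map_mul, hf _, Finset.mul_sum, mul_smul_comm]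

lemma antisymmetrize_monomial (γ : σ →₀ ℕ) (r : R) :
    antisymmetrize (monomial γ r) = r • alternant R γ := by
  have hone : antisymmetrize (monomial γ (1 : R)) = alternant R γ := by
    rw [antisymmetrize_apply, alternant, ← Matrix.det_transpose, Matrix.det_apply]
    refine Finset.sum_congr rfl fun τ _ ↦ ?_
    simp [monomial_eq, Finsupp.prod_fintype, map_prod, Units.smul_def, zsmul_eq_mul, smul_eq_C_mul]
  rw [← hone, ← map_smul, smul_monomial, smul_eq_mul, mul_one]

lemma coeff_alternant (α γ : σ →₀ ℕ) :
    coeff α (alternant R γ) =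
      ∑ τ : Equiv.Perm σ, if γ.mapDomain τ = α then ((τ.sign : ℤ) : R) else 0 := by
  have h := antisymmetrize_monomial γ (1 : R)
  rw [one_smul] at h
  simp only [← h, antisymmetrize_apply, rename_monomial, coeff_sum, coeff_smul, coeff_monomial,
    smul_eq_mul, mul_ite, mul_one, mul_zero]

lemma isRegular_alternant_val (m : ℕ) :
    IsRegular (alternant R (Fin.val : Fin m → ℕ)) := by
  have h : alternant R (Fin.val : Fin m → ℕ) = (Matrix.vandermonde X).det := by
    rw [alternant, ← Matrix.det_transpose]
    rfl
  rw [h, Matrix.det_vandermonde]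
  exact IsRegular.prod fun i _ ↦ IsRegular.prod fun j hj ↦
    isRegular_X_sub_X (Finset.mem_Ioi.mp hj).ne'

end Alternant

section Schur

variable {R : Type*} [CommRing R] {m : ℕ}

lemma coeff_alternant_of_strictMono {α γ : Fin m →₀ ℕ} (hα : StrictMono α) (hγ : StrictMono γ) :
    coeff α (alternant R γ) = if γ = α then 1 else 0 := by
  have hperm (τ : Equiv.Perm (Fin m)) : γ.mapDomain τ = α ↔ γ = α ∧ τ = 1 := by
    refine ⟨fun h ↦ ?_, fun h ↦ by simp [h.1, h.2]⟩
    have hcomp : ⇑γ = α ∘ τ := by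
      ext i
      rw [← h, Function.comp_apply, Finsupp.mapDomain_apply τ.injective]
    have hγα : γ = α :=
      DFunLike.coe_injective <| (hγ.range_inj hα).mp (by rw [hcomp, τ.surjective.range_comp])
    refine ⟨hγα, Equiv.ext fun i ↦ hα.injective ?_⟩
    simpa [hγα] using congr($hcomp.symm i)
  simp [coeff_alternant, hperm, ite_and]

variable (R) in
/-- The complete homogeneous symmetric polynomial of degree `n`, as an element of the ring of
symmetric polynomials. -/
noncomputable def symmHsymm {σ : Type*} [Fintype σ] [DecidableEq σ] (n : ℕ) :
    symmetricSubalgebra σ R :=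
  ⟨hsymm σ R n, hsymm_isSymmetric σ R n⟩

variable (R) in
/-- The Jacobi–Trudi matrix `h_{γ i - l}`. The case distinction implements `h_n = 0` for `n < 0`,
which truncated subtraction would turn into `h_0 = 1`. -/
noncomputable def jacobiTrudi (γ : Fin m → ℕ) :
    Matrix (Fin m) (Fin m) (symmetricSubalgebra (Fin m) R) :=
  Matrix.of fun i l ↦ if l ≤ γ i then symmHsymm R (γ i - l) else 0

variable (R) in
/-- The Schur polynomial, given by the Jacobi–Trudi formula. It is indexed by the exponents
`γ i = λ i + i` of its alternant rather than by the partition `λ`, whose parts are listed in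
increasing order; `γ = Fin.val` is the empty partition. -/
noncomputable def schur (γ : Fin m → ℕ) : symmetricSubalgebra (Fin m) R :=
  (jacobiTrudi R γ).det

variable (R m) in
/-- The matrix whose column `j` lists the signed elementary symmetric polynomials in the variables
other than `x j`. -/
noncomputable def esymmEraseMatrix :
    Matrix (Fin m) (Fin m) (MvPolynomial (Fin m) R) :=
  Matrix.of fun l j ↦ (esymmPolyErase R j).coeff l

lemma of_X_pow_eq_jacobiTrudi_mul (γ : Fin m → ℕ) :
    Matrix.of (fun i j ↦ (X j : MvPolynomial (Fin m) R) ^ γ i) =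
      (jacobiTrudi R γ).map (symmetricSubalgebra (Fin m) R).val * esymmEraseMatrix R m := by
  ext1 i j
  rw [Matrix.of_apply, X_pow_eq_sum_hsymm, Fintype.card_fin, Finset.sum_range, Matrix.mul_apply]
  refine Finset.sum_congr rfl fun l _ ↦ ?_
  by_cases hl : (l : ℕ) ≤ γ i <;> simp [jacobiTrudi, esymmEraseMatrix, symmHsymm, hl]

lemma schur_val : schur R (Fin.val : Fin m → ℕ) = 1 := by
  rw [schur, Matrix.det_of_isLowerTriangular]
  · refine Finset.prod_eq_one fun i _ ↦ Subtype.ext ?_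
    simp [jacobiTrudi, symmHsymm]
  · intro i l (hil : i < l)
    simp [jacobiTrudi, hil]

lemma alternant_eq_schur_mul_det (γ : Fin m → ℕ) :
    alternant R γ = schur R γ * (esymmEraseMatrix R m).det := by
  rw [alternant, of_X_pow_eq_jacobiTrudi_mul, Matrix.det_mul, schur]
  congr 1
  exact ((symmetricSubalgebra (Fin m) R).val.map_det _).symm

lemma det_esymmEraseMatrix :
    (esymmEraseMatrix R m).det = alternant R (Fin.val : Fin m → ℕ) := by
  simp [alternant_eq_schur_mul_det, schur_val]

theorem alternant_eq_schur_mul (γ : Fin m → ℕ) :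
    alternant R γ = (schur R γ : MvPolynomial (Fin m) R) * alternant R (Fin.val : Fin m → ℕ) := by
  rw [← det_esymmEraseMatrix, alternant_eq_schur_mul_det]

lemma coeff_schur_mul_alternant_val {α γ : Fin m →₀ ℕ} (hα : StrictMono α) (hγ : StrictMono γ) :
    coeff α ((schur R γ : MvPolynomial (Fin m) R) * alternant R Fin.val) =
      if γ = α then 1 else 0 := by
  rw [← alternant_eq_schur_mul, coeff_alternant_of_strictMono hα hγ]

lemma schur_eq_zero_of_not_injective {γ : Fin m → ℕ} (hγ : ¬ Function.Injective γ) :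
    schur R γ = 0 := by
  obtain ⟨i, j, hij, hne⟩ := Function.not_injective_iff.mp hγ
  exact Matrix.det_zero_of_row_eq hne (by ext1 l; simp [jacobiTrudi, hij])

lemma schur_comp_perm (γ : Fin m → ℕ) (τ : Equiv.Perm (Fin m)) :
    schur R (γ ∘ τ) = ((τ.sign : ℤ) : R) • schur R γ := by
  rw [Algebra.smul_def, map_intCast]
  exact Matrix.det_permute τ (jacobiTrudi R γ)

theorem eq_sum_coeff_smul_schur (f : symmetricSubalgebra (Fin m) R) :
    f = ∑ β ∈ (f : MvPolynomial (Fin m) R).support,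
      coeff β (f : MvPolynomial (Fin m) R) • schur R (fun i ↦ β i + i) := by
  let δ : Fin m →₀ ℕ := Finsupp.equivFunOnFinite.symm Fin.val
  refine Subtype.ext ((isRegular_alternant_val (R := R) m).right ?_)
  calc (f : MvPolynomial (Fin m) R) * alternant R Fin.val
      = antisymmetrize ((f : MvPolynomial (Fin m) R) * monomial δ 1) := by
        rw [antisymmetrize_mul_of_isSymmetric f.2, antisymmetrize_monomial, one_smul]
        rfl
    _ = ∑ β ∈ (f : MvPolynomial (Fin m) R).support, coeff β (f : MvPolynomial (Fin m) R) •
          alternant R (fun i ↦ β i + i) := by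
        conv_lhs => rw [(f : MvPolynomial (Fin m) R).as_sum]
        rw [Finset.sum_mul, map_sum]
        refine Finset.sum_congr rfl fun β _ ↦ ?_
        rw [monomial_mul, mul_one, antisymmetrize_monomial]
        rfl
    _ = _ := by
        simp only [AddSubmonoidClass.coe_finsetSum, Finset.sum_mul, Subalgebra.coe_smul,
          smul_mul_assoc, ← alternant_eq_schur_mul]

end Schur

section Quotient

variable (R : Type*) [CommRing R] (m d : ℕ)

/-- The ideal of the ring of symmetric polynomials over a commutative ring generated by the
complete homogeneous symmetric polynomials of degree greater than `d`; over a field and for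
`d = q - m` it is `hsymmIdeal`. -/
noncomputable def hsymmIdealGT : Ideal (symmetricSubalgebra (Fin m) R) :=
  Ideal.span {p : symmetricSubalgebra (Fin m) R |
    ∃ j : ℕ, d < j ∧ (p : MvPolynomial (Fin m) R) = hsymm (Fin m) R j}

variable {R m d}

lemma schur_mem_hsymmIdealGT {γ : Fin m → ℕ} {i : Fin m} (hi : d + m ≤ γ i) :
    schur R γ ∈ hsymmIdealGT R m d := by
  refine det_mem_of_row_mem (i := i) fun l ↦ ?_
  rw [jacobiTrudi, Matrix.of_apply, if_pos (by lia)]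
  exact Ideal.subset_span ⟨γ i - l, by lia, rfl⟩

lemma hsymm_mul_alternant_val (l : Fin m) (n : ℕ) :
    hsymm (Fin m) R n * alternant R (Fin.val : Fin m → ℕ) =
      ∑ i, X i ^ (n + l) * (esymmEraseMatrix R m).adjugate i l := by
  -- For the constant exponents `n + l`, the `l`-th diagonal Jacobi–Trudi entry is `h_n`.
  -- It is isolated by inverting the other matrix factor up to its determinant.
  have hadj := congr($(of_X_pow_eq_jacobiTrudi_mul (R := R) fun _ : Fin m ↦ n + l) *
    (esymmEraseMatrix R m).adjugate)
  rw [mul_assoc, Matrix.mul_adjugate, det_esymmEraseMatrix, Matrix.mul_smul, mul_one] at hadj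
  simpa [Matrix.mul_apply, jacobiTrudi, symmHsymm, mul_comm] using congr($hadj.symm l l)

lemma hsymm_mul_alternant_val_mem_span {j : ℕ} (hj : d < j) :
    hsymm (Fin m) R j * alternant R (Fin.val : Fin m → ℕ) ∈
      Ideal.span (Set.range fun i : Fin m ↦ (X i : MvPolynomial (Fin m) R) ^ (d + m)) := by
  obtain rfl | hm := m.eq_zero_or_pos
  · obtain ⟨j, rfl⟩ := Nat.exists_eq_succ_of_ne_zero (by lia : j ≠ 0)
    simp [hsymm]
  · rw [hsymm_mul_alternant_val ⟨m - 1, by lia⟩]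
    refine Ideal.sum_mem _ fun i _ ↦ Ideal.mul_mem_right _ _ ?_
    exact Ideal.mem_of_dvd _ (pow_dvd_pow _ (by lia)) (Ideal.subset_span ⟨i, rfl⟩)

lemma coeff_mul_alternant_val_eq_zero {f : symmetricSubalgebra (Fin m) R}
    (hf : f ∈ hsymmIdealGT R m d) {α : Fin m →₀ ℕ} (hα : ∀ i, α i < d + m) :
    coeff α ((f : MvPolynomial (Fin m) R) * alternant R Fin.val) = 0 := by
  refine coeff_eq_zero_of_mem_span_X_pow ?_ hα
  set J := Ideal.span (Set.range fun i : Fin m ↦ (X i : MvPolynomial (Fin m) R) ^ (d + m))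
  have hle : hsymmIdealGT R m d ≤
      (J.colon {alternant R Fin.val}).comap (symmetricSubalgebra (Fin m) R).val := by
    refine Ideal.span_le.mpr ?_
    rintro p ⟨j, hj, hp⟩
    simpa [Submodule.mem_colon_singleton, hp] using hsymm_mul_alternant_val_mem_span hj
  exact Submodule.mem_colon_singleton.mp (hle hf)

variable (R m d) in
/-- The class modulo `hsymmIdealGT R m d` of the Schur polynomial with exponents `α`, that is, of a
partition fitting in an `m × d` box. -/
noncomputable def schurClass (α : Fin m ↪o Fin (d + m)) :
    symmetricSubalgebra (Fin m) R ⧸ hsymmIdealGT R m d :=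
  Ideal.Quotient.mkₐ R _ (schur R fun i ↦ (α i : ℕ))

variable (R m d) in
lemma linearIndependent_schurClass :
    LinearIndependent R (schurClass R m d) := by
  let exponent (α : Fin m ↪o Fin (d + m)) : Fin m →₀ ℕ :=
    Finsupp.equivFunOnFinite.symm fun i ↦ (α i : ℕ)
  have hmono (α) : StrictMono (exponent α) := fun _ _ hij ↦ α.strictMono hij
  have hinj (α β) : exponent β = exponent α ↔ β = α :=
    ⟨fun h ↦ DFunLike.ext _ _ fun i ↦ Fin.ext congr($h i), congrArg exponent⟩
  refine linearIndependent_iff'.mpr fun s c hc α hα ↦ ?_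
  have hmem : ∑ β ∈ s, c β • schur R (exponent β) ∈ hsymmIdealGT R m d := by
    rw [← Ideal.Quotient.eq_zero_iff_mem, ← Ideal.Quotient.mkₐ_eq_mk R, map_sum, ← hc]
    exact Finset.sum_congr rfl fun β _ ↦ map_smul _ _ _
  have hcoeff := coeff_mul_alternant_val_eq_zero hmem (α := exponent α) fun i ↦ (α i).isLt
  simpa [Finset.sum_mul, coeff_sum, coeff_schur_mul_alternant_val (hmono α) (hmono _), hinj, hα]
    using hcoeff

lemma mk_schur_mem_span_schurClass (γ : Fin m → ℕ) :
    Ideal.Quotient.mkₐ R (hsymmIdealGT R m d) (schur R γ) ∈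
      Submodule.span R (Set.range (schurClass R m d)) := by
  by_cases hlt : ∀ i, γ i < d + m
  · by_cases hγ : Function.Injective γ
    · have hmono : StrictMono (γ ∘ Tuple.sort γ) :=
        (Tuple.monotone_sort γ).strictMono_of_injective (hγ.comp (Tuple.sort γ).injective)
      let α : Fin m ↪o Fin (d + m) :=
        OrderEmbedding.ofStrictMono (fun i ↦ ⟨γ (Tuple.sort γ i), hlt _⟩) hmono
      have hsort : schur R γ =
          (((Tuple.sort γ)⁻¹.sign : ℤ) : R) • schur R (γ ∘ Tuple.sort γ) := by
        rw [← schur_comp_perm, Function.comp_assoc, Equiv.Perm.inv_def,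
          Equiv.self_comp_symm, Function.comp_id]
      rw [hsort, map_smul]
      exact Submodule.smul_mem _ _ (Submodule.subset_span ⟨α, rfl⟩)
    · rw [schur_eq_zero_of_not_injective hγ, map_zero]
      exact Submodule.zero_mem _
  · push Not at hlt
    obtain ⟨i, hi⟩ := hlt
    have hzero : Ideal.Quotient.mkₐ R (hsymmIdealGT R m d) (schur R γ) = 0 :=
      Ideal.Quotient.eq_zero_iff_mem.mpr (schur_mem_hsymmIdealGT hi)
    rw [hzero]
    exact Submodule.zero_mem _

variable (R m d) in
lemma span_schurClass :
    Submodule.span R (Set.range (schurClass R m d)) = ⊤ := by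
  refine eq_top_iff.mpr fun x _ ↦ ?_
  obtain ⟨f, rfl⟩ := Ideal.Quotient.mkₐ_surjective R (hsymmIdealGT R m d) x
  rw [eq_sum_coeff_smul_schur f, map_sum]
  refine Submodule.sum_mem _ fun β _ ↦ ?_
  rw [map_smul]
  exact Submodule.smul_mem _ _ (mk_schur_mem_span_schurClass _)

variable (R m d) in
/-- The basis of the quotient given by the Schur classes of the partitions fitting in an `m × d`
box. -/
noncomputable def schurBasis : Module.Basis (Fin m ↪o Fin (d + m)) R
    (symmetricSubalgebra (Fin m) R ⧸ hsymmIdealGT R m d) :=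
  Module.Basis.mk (linearIndependent_schurClass R m d) (span_schurClass R m d).ge

end Quotient

theorem symmetric_quotient_finrank_choose_general (R : Type*) [CommRing R] [Nontrivial R]
    (m d : ℕ) :
    Module.Free R (symmetricSubalgebra (Fin m) R ⧸ hsymmIdealGT R m d) ∧
      Module.Finite R (symmetricSubalgebra (Fin m) R ⧸ hsymmIdealGT R m d) ∧
      Module.finrank R (symmetricSubalgebra (Fin m) R ⧸ hsymmIdealGT R m d) =
        Nat.choose (d + m) m := by
  refine ⟨.of_basis (schurBasis R m d), .of_basis (schurBasis R m d), ?_⟩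
  rw [Module.finrank_eq_nat_card_basis (schurBasis R m d),
    Nat.card_congr Set.powersetCard.ofFinEmbEquiv, Set.powersetCard.card, Nat.card_fin]

set_option synthInstance.maxHeartbeats 1000000 in
theorem symmetric_quotient_finrank_choose (k : Type*) [Field k] (m q : ℕ) (h : m ≤ q) :
    FiniteDimensional k (symmetricSubalgebra (Fin m) k ⧸ hsymmIdeal k m q) ∧
      Module.finrank k (symmetricSubalgebra (Fin m) k ⧸ hsymmIdeal k m q) = Nat.choose q m := by
  obtain ⟨-, hfinite, hrank⟩ := symmetric_quotient_finrank_choose_general k m (q - m)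
  exact ⟨hfinite, by rwa [Nat.sub_add_cancel h] at hrank⟩
end

section
/- Let k be a field of characteristic different from 2, A = k[x,y]/(x², y²), and M = A/(x + y). Then dim_k Tor_0^A(M, M) = 2 and dim_k Tor_i^A(M, M) = 1 for every i ≥ 1. -/
/-!
STATEMENT 15: Let `k` be a field with `char k ≠ 2`, `A = k[x,y]/(x², y²)` and
`M = A/(x + y)`.  Then `dim_k Tor_0^A(M, M) = 2` and `dim_k Tor_i^A(M, M) = 1` for all
`i ≥ 1`.
-/

open CategoryTheory MvPolynomial

/-- The ring `A = k[x,y]/(x², y²)`. -/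
noncomputable abbrev squareZeroAlg (k : Type*) [Field k] :=
  MvPolynomial (Fin 2) k ⧸
    (Ideal.span {(X 0 : MvPolynomial (Fin 2) k) ^ 2, (X 1 : MvPolynomial (Fin 2) k) ^ 2})

/-- The module `M = A/(x + y)` over `A = k[x,y]/(x², y²)`. -/
noncomputable abbrev antiDiagonalQuot (k : Type*) [Field k] :=
  squareZeroAlg k ⧸
    (Ideal.span {Ideal.Quotient.mk _ ((X 0 : MvPolynomial (Fin 2) k))
      + Ideal.Quotient.mk _ ((X 1 : MvPolynomial (Fin 2) k))} :
        Ideal (squareZeroAlg k))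

/-!
Write `A = B[ε]` with `B = k[x]/(x²)` and `ε = y`.  If `c * c = 0` in `B`, the annihilator of
`c + ε` in `B[ε]` is generated by `c - ε`, and conversely; so `x + y` and `x - y` generate each
other's annihilators, and `M` is resolved by copies of `A` with differentials alternating between
`x + y` and `x - y`.  Tensoring with `M` kills `x + y` and leaves `x - y`, so every higher `Tor` is
the kernel or the cokernel of `x - y` on `M`.  There `x - y` acts as `2 * x`, and under `M ≅ k[ε]`,
`x ↦ ε`, this is `2 * ε`, of rank one on a plane when `2 ≠ 0`.
-/

universe u

section Periodic

open Limits MonoidalCategory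

/-- An exact pair of zero divisors: each of `a` and `b` generates the annihilator of the other. -/
structure IsExactPair {R : Type*} [CommRing R] (a b : R) : Prop where
  mul_left_eq_zero_iff {r : R} : a * r = 0 ↔ b ∣ r
  mul_right_eq_zero_iff {r : R} : b * r = 0 ↔ a ∣ r

namespace IsExactPair

variable {R : Type*} [CommRing R] {a b : R}

lemma symm (h : IsExactPair a b) : IsExactPair b a :=
  ⟨h.mul_right_eq_zero_iff, h.mul_left_eq_zero_iff⟩

lemma mul_eq_zero (h : IsExactPair a b) : a * b = 0 :=
  h.mul_left_eq_zero_iff.2 dvd_rfl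

lemma of_map {S : Type*} [CommRing S] {F : Type*} [EquivLike F R S] [RingEquivClass F R S]
    (e : F) (h : IsExactPair (e a) (e b)) : IsExactPair a b where
  mul_left_eq_zero_iff {r} := by
    rw [← map_dvd_iff e, ← h.mul_left_eq_zero_iff, ← map_mul, EmbeddingLike.map_eq_zero_iff]
  mul_right_eq_zero_iff {r} := by
    rw [← map_dvd_iff e, ← h.mul_right_eq_zero_iff, ← map_mul, EmbeddingLike.map_eq_zero_iff]

end IsExactPair

variable {R : Type u} [CommRing R] {a b : R}

/-- The periodic chain complex `⋯ ⟶ N --a--> N --b--> N --a--> N ⟶ 0`, for `a * b = 0`. -/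
noncomputable abbrev periodicComplex (hab : a * b = 0) (N : ModuleCat.{u} R) :
    ChainComplex (ModuleCat.{u} R) ℕ :=
  HomologicalComplex.alternatingConst N (φ := b • 𝟙 N) (ψ := a • 𝟙 N)
    (by simp [smul_smul, hab]) (by simp [smul_smul, mul_comm b a, hab])
    fun _ _ => ComplexShape.down_nat_odd_add

namespace periodicComplex

/-- The augmentation of the periodic complex on `R` towards `R ⧸ (a)`. -/
noncomputable def augmentation (hab : a * b = 0) :
    periodicComplex hab (ModuleCat.of R R) ⟶
      (ChainComplex.single₀ (ModuleCat.{u} R)).obj (ModuleCat.of R (R ⧸ Ideal.span {a})) :=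
  ((periodicComplex hab (ModuleCat.of R R)).toSingle₀Equiv _).symm
    ⟨ModuleCat.ofHom (Ideal.span {a}).mkQ, by
      ext
      exact (Submodule.Quotient.mk_eq_zero (Ideal.span {a})).2
        ((Ideal.span {a}).mul_mem_right 1 (Ideal.mem_span_singleton_self a))⟩

lemma quasiIsoAt_zero_augmentation (hab : a * b = 0) : QuasiIsoAt (augmentation hab) 0 := by
  rw [ChainComplex.quasiIsoAt₀_iff, ShortComplex.quasiIso_iff_of_zeros' _ rfl rfl rfl]
  have hπ : (augmentation hab).f 0 = ModuleCat.ofHom (Ideal.span {a}).mkQ :=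
    ChainComplex.toSingle₀Equiv_symm_apply_f_zero _ _
  constructor
  · rw [ShortComplex.moduleCat_exact_iff]
    intro r (hr : (augmentation hab).f 0 r = 0)
    rw [hπ] at hr
    obtain ⟨s, hs⟩ := Ideal.mem_span_singleton.1 ((Submodule.Quotient.mk_eq_zero _).1 hr)
    exact ⟨s, by simpa [HomologicalComplex.alternatingConst] using! hs.symm⟩
  · refine (ModuleCat.epi_iff_surjective ((augmentation hab).f 0)).2 ?_
    rw [hπ]
    exact (Ideal.span {a}).mkQ_surjective

end periodicComplex

namespace IsExactPair

lemma shortComplex_exact (h : IsExactPair a b) (w : (b • 𝟙 (ModuleCat.of R R)) ≫ (a • 𝟙 _) = 0) :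
    (ShortComplex.mk (b • 𝟙 (ModuleCat.of R R)) (a • 𝟙 _) w).Exact := by
  rw [ShortComplex.moduleCat_exact_iff]
  intro r hr
  obtain ⟨s, hs⟩ := h.mul_left_eq_zero_iff.1 hr
  exact ⟨s, hs.symm⟩

lemma exactAt_succ (h : IsExactPair a b) (n : ℕ) :
    (periodicComplex h.mul_eq_zero (ModuleCat.of R R)).ExactAt (n + 1) := by
  rw [HomologicalComplex.exactAt_iff' _ (n + 2) (n + 1) n (by simp) (by simp)]
  rcases (n + 1).even_or_odd with hn | hn
  · exact (ShortComplex.exact_iff_of_iso (HomologicalComplex.alternatingConstScIsoEven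
      _ _ _ _ (by simp) (by simp) hn)).2 (h.symm.shortComplex_exact _)
  · exact (ShortComplex.exact_iff_of_iso (HomologicalComplex.alternatingConstScIsoOdd
      _ _ _ _ (by simp) (by simp) hn)).2 (h.shortComplex_exact _)

/-- The projective resolution `⋯ ⟶ R --b--> R --a--> R` of `R ⧸ (a)`. -/
noncomputable def resolution (h : IsExactPair a b) :
    ProjectiveResolution (ModuleCat.of R (R ⧸ Ideal.span {a})) where
  complex := periodicComplex h.mul_eq_zero (ModuleCat.of R R)
  projective _ := inferInstanceAs (Projective (ModuleCat.of R R))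
  π := periodicComplex.augmentation h.mul_eq_zero
  quasiIso.quasiIsoAt
    | 0 => periodicComplex.quasiIsoAt_zero_augmentation h.mul_eq_zero
    | n + 1 => (quasiIsoAt_iff_exactAt' _ _ (ChainComplex.exactAt_succ_single_obj ..)).2
        (h.exactAt_succ n)

end IsExactPair

/-- Tensoring the periodic complex on `R` with `N` gives the periodic complex on `N`. -/
noncomputable def periodicComplex.tensorIso (hab : a * b = 0) (N : ModuleCat.{u} R) :
    (((tensoringLeft (ModuleCat.{u} R)).obj N).mapHomologicalComplex _).obj
      (periodicComplex hab (ModuleCat.of R R)) ≅ periodicComplex hab N :=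
  HomologicalComplex.Hom.isoOfComponents (fun _ => ρ_ N) fun i j h => by
    subst h
    have hmap (r : R) : (ρ_ N).hom ≫ (r • 𝟙 N) =
        ((tensoringLeft (ModuleCat.{u} R)).obj N).map (r • 𝟙 (ModuleCat.of R R)) ≫ (ρ_ N).hom :=
      (by simp : _ = (N ◁ (r • 𝟙 (𝟙_ (ModuleCat.{u} R)))) ≫ (ρ_ N).hom)
    by_cases hj : Even (j + 1) <;>
      simp only [HomologicalComplex.alternatingConst_d, ComplexShape.down_Rel, hj, ↓reduceIte,
        Functor.mapHomologicalComplex_obj_d] <;>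
      exact hmap _

/-- `Tor₀(N, R ⧸ (a))` is `N` as soon as `a` annihilates `N`. -/
noncomputable def torZeroIso (N : ModuleCat.{u} R) (haN : ∀ m : N, a • m = 0) :
    ((Tor (ModuleCat.{u} R) 0).obj N).obj (ModuleCat.of R (R ⧸ Ideal.span {a})) ≅ N :=
  have : PreservesFiniteColimits ((tensoringLeft (ModuleCat.{u} R)).obj N) :=
    inferInstanceAs (PreservesFiniteColimits (tensorLeft N))
  have hbot : (Ideal.span {a} • ⊤ : Submodule R N) = ⊥ := by
    rw [Submodule.ideal_span_singleton_smul, eq_bot_iff]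
    rintro _ ⟨m, -, rfl⟩
    exact haN m
  ((tensoringLeft (ModuleCat.{u} R)).obj N).leftDerivedZeroIsoSelf.app _ ≪≫
    (TensorProduct.tensorQuotEquivQuotSMul N (Ideal.span {a}) ≪≫ₗ
      Submodule.quotEquivOfEqBot _ hbot).toModuleIso

namespace IsExactPair

/-- `Tor` against `R ⧸ (a)` is the homology of the periodic complex. -/
noncomputable def torIso (h : IsExactPair a b) (N : ModuleCat.{u} R) (n : ℕ) :
    ((Tor (ModuleCat.{u} R) n).obj N).obj (ModuleCat.of R (R ⧸ Ideal.span {a})) ≅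
      (periodicComplex h.mul_eq_zero N).homology n :=
  h.resolution.isoLeftDerivedObj _ n ≪≫
    HomologicalComplex.homologyMapIso (periodicComplex.tensorIso h.mul_eq_zero N) n

/-- When `a` annihilates `N`, the odd `Tor` modules are cokernels of multiplication by `b`. -/
noncomputable def torIsoOdd (h : IsExactPair a b) (N : ModuleCat.{u} R)
    (haN : ∀ m : N, a • m = 0) {n : ℕ} (hn : Odd n) :
    ((Tor (ModuleCat.{u} R) n).obj N).obj (ModuleCat.of R (R ⧸ Ideal.span {a})) ≅
      ModuleCat.of R (N ⧸ LinearMap.range (LinearMap.lsmul R N b)) :=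
  h.torIso N n ≪≫
  HomologicalComplex.alternatingConstHomologyIsoOdd N _ _ _ (by simp)
    (by rcases hn with ⟨j, rfl⟩; simp) hn ≪≫
  (ShortComplex.LeftHomologyData.ofIsColimitCokernelCofork _
    (ModuleCat.hom_ext (LinearMap.ext haN)) _ (ModuleCat.cokernelIsColimit _)).homologyIso

/-- When `a` annihilates `N`, the positive even `Tor` modules are kernels of multiplication
by `b`. -/
noncomputable def torIsoEven (h : IsExactPair a b) (N : ModuleCat.{u} R)
    (haN : ∀ m : N, a • m = 0) {n : ℕ} (hn : Even n) (h0 : n ≠ 0) :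
    ((Tor (ModuleCat.{u} R) n).obj N).obj (ModuleCat.of R (R ⧸ Ideal.span {a})) ≅
      ModuleCat.of R (LinearMap.ker (LinearMap.lsmul R N b)) :=
  h.torIso N n ≪≫
  HomologicalComplex.alternatingConstHomologyIsoEven N _ _ _ (by simp)
    (by obtain ⟨m, rfl⟩ := Nat.exists_eq_succ_of_ne_zero h0; simp) hn ≪≫
  (ShortComplex.LeftHomologyData.ofIsLimitKernelFork _
    (ModuleCat.hom_ext (LinearMap.ext haN)) _ (ModuleCat.kernelIsLimit _)).homologyIso

end IsExactPair

end Periodic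

lemma finrank_restrictScalars_obj {k A : Type*} [CommRing k] [CommRing A] [Algebra k A]
    {P : Type*} [AddCommGroup P] [Module A P] [Module k P] [IsScalarTower k A P]
    {N : ModuleCat A} (e : N ≅ ModuleCat.of A P) :
    Module.finrank k ((ModuleCat.restrictScalars (algebraMap k A)).obj N) = Module.finrank k P :=
  LinearEquiv.finrank_eq
    { e.toLinearEquiv.toAddEquiv with
      map_smul' c n := (e.toLinearEquiv.map_smul (algebraMap k A c) n).trans
        (algebraMap_smul A c _) }

lemma finrank_ker_add_finrank_range_restrictScalars {k A P Q : Type*} [Field k] [CommRing A]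
    [Algebra k A] [AddCommGroup P] [Module A P] [Module k P] [IsScalarTower k A P]
    [Module.Finite k P] [AddCommGroup Q] [Module A Q] [Module k Q] [IsScalarTower k A Q]
    (f : P →ₗ[A] Q) :
    Module.finrank k (LinearMap.ker f) + Module.finrank k (LinearMap.range f) =
      Module.finrank k P :=
  (add_comm _ _).trans (f.restrictScalars k).finrank_range_add_finrank_ker

lemma IsExactPair.finrank_tor_add_finrank_range (k : Type*) [Field k] {R : Type u}
    [CommRing R] [Algebra k R] {a b : R} (h : IsExactPair a b) {N : Type u} [AddCommGroup N]
    [Module R N] [Module k N] [IsScalarTower k R N] [Module.Finite k N]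
    (haN : ∀ m : N, a • m = 0) {n : ℕ} (hn : n ≠ 0) :
    Module.finrank k ((ModuleCat.restrictScalars (algebraMap k R)).obj
        (((Tor (ModuleCat.{u} R) n).obj (ModuleCat.of R N)).obj
          (ModuleCat.of R (R ⧸ Ideal.span {a})))) +
      Module.finrank k (LinearMap.range (LinearMap.lsmul R N b)) = Module.finrank k N := by
  rcases n.even_or_odd with hn' | hn'
  · rw [finrank_restrictScalars_obj (h.torIsoEven _ haN hn' hn)]
    exact finrank_ker_add_finrank_range_restrictScalars _
  · rw [finrank_restrictScalars_obj (h.torIsoOdd _ haN hn')]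
    exact ((LinearMap.range (LinearMap.lsmul R N b)).restrictScalars k).finrank_quotient_add_finrank

lemma quotient_span_singleton_smul_eq_zero {R : Type*} [CommRing R] (a : R)
    (m : R ⧸ Ideal.span {a}) : a • m = 0 :=
  Module.mem_annihilator.1
    ((Ideal.annihilator_quotient (I := Ideal.span {a})).symm ▸ Ideal.mem_span_singleton_self a) m

section DualNumbers

open DualNumber TrivSqZeroExt

lemma dualNumber_algHom_ext {K A B : Type*} [CommSemiring K] [Semiring A] [Algebra K A]
    [Semiring B] [Algebra K B] {f g : A[ε] →ₐ[K] B}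
    (hinl : f.comp (inlAlgHom K A A) = g.comp (inlAlgHom K A A)) (hε : f ε = g ε) : f = g := by
  refine DualNumber.algHom_ext' hinl (LinearMap.ext fun r => ?_)
  have hr : f (inl r) = g (inl r) := DFunLike.congr_fun hinl r
  change f (r • ε) = g (r • ε)
  rw [← inl_mul_eq_smul, map_mul, map_mul, hr, hε]

variable {B : Type*} [CommRing B]

lemma inl_add_eps_mul_eq_zero_iff {c : B} (hc : c * c = 0) {r : B[ε]} :
    (inl c + ε) * r = 0 ↔ inl c - ε ∣ r := by
  constructor
  · intro h
    have h_snd : c * r.snd + r.fst = 0 := by simpa using congrArg snd h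
    refine ⟨inl (-r.snd), TrivSqZeroExt.ext ?_ ?_⟩
    · simp only [fst_mul, fst_sub, fst_inl, fst_eps, sub_zero]
      linear_combination h_snd
    · simp
  · rintro ⟨s, rfl⟩
    have h_mul : (inl c + ε : B[ε]) * (inl c - ε) = 0 := by ext <;> simp [hc]
    rw [← mul_assoc, h_mul, zero_mul]

lemma isExactPair_inl_add_eps_inl_sub_eps {c : B} (hc : c * c = 0) :
    IsExactPair (inl c + ε : B[ε]) (inl c - ε) where
  mul_left_eq_zero_iff := inl_add_eps_mul_eq_zero_iff hc
  mul_right_eq_zero_iff {r} := by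
    have h := inl_add_eps_mul_eq_zero_iff (c := -c) (by simpa using hc) (r := r)
    rwa [inl_neg, neg_add_eq_sub, ← neg_sub (inl c), neg_mul, neg_eq_zero, ← neg_add', neg_dvd] at h

end DualNumbers

namespace squareZeroAlg

open DualNumber

variable {k : Type*} [Field k]

/-- The class of the variable `x` in `k[x,y]/(x², y²)`. -/
noncomputable abbrev x : squareZeroAlg k := Ideal.Quotient.mk _ (X 0)

/-- The class of the variable `y` in `k[x,y]/(x², y²)`. -/
noncomputable abbrev y : squareZeroAlg k := Ideal.Quotient.mk _ (X 1)

lemma x_mul_x : (x : squareZeroAlg k) * x = 0 := by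
  rw [← map_mul, ← sq, Ideal.Quotient.eq_zero_iff_mem]
  exact Ideal.subset_span (by simp)

lemma y_mul_y : (y : squareZeroAlg k) * y = 0 := by
  rw [← map_mul, ← sq, Ideal.Quotient.eq_zero_iff_mem]
  exact Ideal.subset_span (by simp)

lemma algHom_ext {B : Type*} [Semiring B] [Algebra k B] {f g : squareZeroAlg k →ₐ[k] B}
    (hx : f x = g x) (hy : f y = g y) : f = g :=
  Ideal.Quotient.algHom_ext k (MvPolynomial.algHom_ext fun i => by fin_cases i <;> assumption)

section lift

variable {B : Type*} [CommRing B] [Algebra k B] (u v : B) (hu : u * u = 0) (hv : v * v = 0)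

/-- The algebra map out of `k[x,y]/(x², y²)` sending `x` and `y` to square-zero elements. -/
noncomputable def lift : squareZeroAlg k →ₐ[k] B :=
  Ideal.Quotient.liftₐ _ (aeval ![u, v]) fun p hp => by
    have h : Ideal.span {(X 0 : MvPolynomial (Fin 2) k) ^ 2, X 1 ^ 2} ≤
        RingHom.ker (aeval (R := k) ![u, v]) := by
      rw [Ideal.span_le]
      rintro _ (rfl | rfl) <;> simp [RingHom.mem_ker, sq, hu, hv]
    exact h hp

@[simp] lemma lift_x : lift (k := k) u v hu hv x = u :=
  (aeval_X ![u, v] 0 : aeval (R := k) ![u, v] (X 0) = u)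

@[simp] lemma lift_y : lift (k := k) u v hu hv y = v :=
  (aeval_X ![u, v] 1 : aeval (R := k) ![u, v] (X 1) = v)

end lift

/-- The identification of `k[x,y]/(x², y²)` with the dual numbers over `k[x]/(x²)`. -/
noncomputable def equivDualNumberDualNumber : squareZeroAlg k ≃ₐ[k] k[ε][ε] :=
  .ofAlgHom
    (lift (B := k[ε][ε]) (TrivSqZeroExt.inl ε) ε
      (by rw [← TrivSqZeroExt.inl_mul, eps_mul_eps, TrivSqZeroExt.inl_zero]) eps_mul_eps)
    (DualNumber.lift ⟨(DualNumber.lift ⟨(Algebra.ofId k _, x), x_mul_x, fun _ => .all _ _⟩, y),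
      y_mul_y, fun _ => .all _ _⟩)
    (dualNumber_algHom_ext (DualNumber.algHom_ext (by simp)) (by simp))
    (by apply algHom_ext <;> simp)

lemma isExactPair_x_add_y_x_sub_y : IsExactPair (x + y : squareZeroAlg k) (x - y) := by
  refine .of_map (equivDualNumberDualNumber (k := k)) ?_
  simpa [equivDualNumberDualNumber] using
    isExactPair_inl_add_eps_inl_sub_eps (eps_mul_eps (R := k))

/-- The map `k[x,y]/(x², y²) → k[ε]` sending `x` to `ε` and `y` to `-ε`. -/
noncomputable def antiDiagonalHom : squareZeroAlg k →ₐ[k] k[ε] :=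
  lift ε (-ε) eps_mul_eps (by rw [neg_mul_neg, eps_mul_eps])

@[simp] lemma antiDiagonalHom_x : antiDiagonalHom (k := k) x = ε := lift_x ..

@[simp] lemma antiDiagonalHom_y : antiDiagonalHom (k := k) y = -ε := lift_y ..

end squareZeroAlg

namespace antiDiagonalQuot

open squareZeroAlg DualNumber TrivSqZeroExt

variable {k : Type u} [Field k]

lemma mk_y : (Ideal.Quotient.mk _ y : antiDiagonalQuot k) = -Ideal.Quotient.mk _ x :=
  eq_neg_of_add_eq_zero_right <| (map_add _ x y).symm.trans <|
    Ideal.Quotient.eq_zero_iff_mem.2 (Ideal.mem_span_singleton_self _)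

/-- The map `k[x,y]/(x², y², x + y) → k[ε]` induced by `antiDiagonalHom`. -/
noncomputable def toDualNumber : antiDiagonalQuot k →ₐ[k] k[ε] :=
  Ideal.Quotient.liftₐ _ antiDiagonalHom fun p hp => by
    obtain ⟨q, rfl⟩ := Ideal.mem_span_singleton.1 hp
    simp

@[simp] lemma toDualNumber_mk (r : squareZeroAlg k) :
    toDualNumber (Ideal.Quotient.mk _ r) = antiDiagonalHom r := rfl

/-- The identification of `k[x,y]/(x², y², x + y)` with `k[ε]` by `x ↦ ε`, `y ↦ -ε`. -/
noncomputable def equivDualNumber : antiDiagonalQuot k ≃ₐ[k] k[ε] :=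
  .ofAlgHom toDualNumber
    (DualNumber.lift ⟨(Algebra.ofId k _, Ideal.Quotient.mk _ x),
      by rw [← map_mul, x_mul_x, map_zero], fun c => Algebra.commute_algebraMap_right c _⟩)
    (DualNumber.algHom_ext (by simp))
    (by
      apply Ideal.Quotient.algHom_ext
      apply squareZeroAlg.algHom_ext <;> simp [mk_y])

lemma equivDualNumber_smul (r : squareZeroAlg k) (m : antiDiagonalQuot k) :
    equivDualNumber (r • m) = antiDiagonalHom r * equivDualNumber m := by
  obtain ⟨s, rfl⟩ := Ideal.Quotient.mk_surjective m
  exact map_mul antiDiagonalHom r s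

lemma finrank_eq_two : Module.finrank k (antiDiagonalQuot k) = 2 := by
  rw [equivDualNumber.toLinearEquiv.finrank_eq]
  exact (Module.finrank_prod (R := k) (M := k) (M' := k)).trans (by simp)

instance : FiniteDimensional k (antiDiagonalQuot k) :=
  .of_finrank_pos (by simp [finrank_eq_two])

lemma x_sub_y_smul (m : antiDiagonalQuot k) :
    (x - y : squareZeroAlg k) • m =
      (2 * (equivDualNumber m).fst) • equivDualNumber.symm (ε : k[ε]) := by
  apply equivDualNumber.injective
  rw [equivDualNumber_smul, map_smul, AlgEquiv.apply_symm_apply]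
  ext <;> simp [two_mul, add_mul]

lemma range_lsmul_x_sub_y (h2 : (2 : k) ≠ 0) :
    (LinearMap.range (LinearMap.lsmul (squareZeroAlg k) (antiDiagonalQuot k)
      (x - y))).restrictScalars k = k ∙ equivDualNumber.symm ε := by
  ext m
  simp only [Submodule.restrictScalars_mem, LinearMap.mem_range, LinearMap.lsmul_apply,
    x_sub_y_smul, Submodule.mem_span_singleton]
  constructor
  · rintro ⟨n, rfl⟩
    exact ⟨_, rfl⟩
  · rintro ⟨c, rfl⟩
    exact ⟨equivDualNumber.symm (inl (c / 2)), by simp [mul_div_cancel₀, h2]⟩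

lemma finrank_range_lsmul_x_sub_y (h2 : (2 : k) ≠ 0) :
    Module.finrank k (LinearMap.range (LinearMap.lsmul (squareZeroAlg k) (antiDiagonalQuot k)
      (x - y))) = 1 := by
  have hε : equivDualNumber.symm (ε : k[ε]) ≠ 0 := by
    rw [ne_eq, map_eq_zero_iff _ equivDualNumber.symm.injective]
    exact fun h => one_ne_zero (congrArg snd h : (1 : k) = 0)
  rw [← finrank_span_singleton (K := k) hε, ← range_lsmul_x_sub_y h2]
  rfl

lemma finrank_tor_zero :
    Module.finrank k
      ((ModuleCat.restrictScalars (algebraMap k (squareZeroAlg k))).obj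
        (((Tor (ModuleCat (squareZeroAlg k)) 0).obj
            (ModuleCat.of (squareZeroAlg k) (antiDiagonalQuot k))).obj
          (ModuleCat.of (squareZeroAlg k) (antiDiagonalQuot k)))) = 2 :=
  (finrank_restrictScalars_obj
    (torZeroIso (.of _ _) (quotient_span_singleton_smul_eq_zero _))).trans finrank_eq_two

lemma finrank_tor_of_ne_zero (h2 : (2 : k) ≠ 0) {n : ℕ} (hn : n ≠ 0) :
    Module.finrank k
      ((ModuleCat.restrictScalars (algebraMap k (squareZeroAlg k))).obj
        (((Tor (ModuleCat (squareZeroAlg k)) n).obj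
            (ModuleCat.of (squareZeroAlg k) (antiDiagonalQuot k))).obj
          (ModuleCat.of (squareZeroAlg k) (antiDiagonalQuot k)))) = 1 := by
  have h := isExactPair_x_add_y_x_sub_y.finrank_tor_add_finrank_range k
    (N := antiDiagonalQuot k) (quotient_span_singleton_smul_eq_zero _) hn
  rw [finrank_range_lsmul_x_sub_y h2, finrank_eq_two] at h
  exact Nat.succ_injective h

end antiDiagonalQuot

theorem tor_squareZero_antiDiagonal (k : Type) [Field k] (h2 : (2 : k) ≠ 0) :
    Module.finrank k
        ((ModuleCat.restrictScalars (algebraMap k (squareZeroAlg k))).obj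
          (((Tor (ModuleCat (squareZeroAlg k)) 0).obj
              (ModuleCat.of (squareZeroAlg k) (antiDiagonalQuot k))).obj
            (ModuleCat.of (squareZeroAlg k) (antiDiagonalQuot k)))) = 2 ∧
      ∀ i : ℕ, 1 ≤ i →
        Module.finrank k
          ((ModuleCat.restrictScalars (algebraMap k (squareZeroAlg k))).obj
            (((Tor (ModuleCat (squareZeroAlg k)) i).obj
                (ModuleCat.of (squareZeroAlg k) (antiDiagonalQuot k))).obj
              (ModuleCat.of (squareZeroAlg k) (antiDiagonalQuot k)))) = 1 :=
  ⟨antiDiagonalQuot.finrank_tor_zero,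
    fun _ hi => antiDiagonalQuot.finrank_tor_of_ne_zero h2 (Nat.ne_of_gt hi)⟩
end
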